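/- For every matrix A ∈ SL(2,ℤ) with trace strictly greater than 2, there exist an integer n ≥ 1, positive integers m_1, …, m_{2n}, and a matrix Q ∈ SL(2,ℤ) such that Q * A * Q⁻¹ = P(m), where P(m) is the type-m matrix. (This is the matrix-level content of the proposition that every autoequivalence F of D^b(E) with tr[F] > 2 has [F] conjugate to [F_m] for some type-m autoequivalence F_m.) -/

import Mathlib

/-!
Write `A = !![a, b; c, d]` and let `t = a + d > 2`, so that `(a - d)² + 4bc = t² - 4 > 0`.

* **Reduction to nonnegative entries** (`exists_conj_nonneg`). If `bc < 0`, then `|a - d|` exceeds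
  `|b|` or `|c|`, since otherwise `(a - d)² + 4bc ≤ -3(a - d)² ≤ 0`. Conjugating by a power `±1` of
  `T` or `U` changes `a - d` by `±2b` or `±2c`, and so makes `|a - d|` smaller. By descent one
  reaches `bc ≥ 0`, where `a, d > 0`; conjugating by the rotation of order four, if necessary,
  makes `b, c ≥ 0`.
* **Words** (`exists_word`). In a nonnegative matrix of determinant one other than the identity one
  row dominates the other, so that a factor `T` or `U` splits off on the left. Inductively,
  `M * U` is a word `U ^ k * ∏ T ^ (p + 1) * U ^ (q + 1)`; the extra factor `U` makes the last
  block complete.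
* **Rotation** (`exists_conj_blocks`). Cancelling that `U` and rotating the word cyclically brings
  it into type-`m` form. The word cannot be a power of `T` or of `U` alone, as these have trace two.
-/

open Matrix

/-- The matrix `T = !![1,0;1,1]` acting on the numerical Grothendieck group. -/
def Tmat : Matrix (Fin 2) (Fin 2) ℤ := !![1, 0; 1, 1]

/-- The matrix `U = !![1,1;0,1]`. -/
def Umat : Matrix (Fin 2) (Fin 2) ℤ := !![1, 1; 0, 1]

/-- The type-`m` matrix
`P(m) = T^{m_{2n}} * U^{m_{2n-1}} * T^{m_{2n-2}} * U^{m_{2n-3}} * ⋯ * T^{m_2} * U^{m_1}`. -/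
def typeM (n : ℕ) (m : ℕ → ℕ) : Matrix (Fin 2) (Fin 2) ℤ :=
  ((List.range n).map (fun i => Tmat ^ m (2 * (n - i)) * Umat ^ m (2 * (n - i) - 1))).prod

/-- Conjugacy by an integer matrix of determinant one, written without an inverse. -/
def SLConj (A B : Matrix (Fin 2) (Fin 2) ℤ) : Prop :=
  ∃ Q : Matrix (Fin 2) (Fin 2) ℤ, Q.det = 1 ∧ Q * A = B * Q

lemma SLConj.refl (A : Matrix (Fin 2) (Fin 2) ℤ) : SLConj A A := ⟨1, by simp, by simp⟩

lemma SLConj.trans {A B C : Matrix (Fin 2) (Fin 2) ℤ} (h₁ : SLConj A B) (h₂ : SLConj B C) :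
    SLConj A C := by
  obtain ⟨Q, hQ, e⟩ := h₁
  obtain ⟨R, hR, f⟩ := h₂
  exact ⟨R * Q, by rw [det_mul, hQ, hR, one_mul],
    by rw [mul_assoc, e, ← mul_assoc, f, mul_assoc]⟩

lemma SLConj.rotate (X : Matrix (Fin 2) (Fin 2) ℤ) {Y : Matrix (Fin 2) (Fin 2) ℤ}
    (hY : Y.det = 1) : SLConj (X * Y) (Y * X) :=
  ⟨Y, hY, (mul_assoc _ _ _).symm⟩

lemma det_Tmat : Tmat.det = 1 := by simp [Tmat, det_fin_two]

lemma det_Umat : Umat.det = 1 := by simp [Umat, det_fin_two]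

lemma Tmat_pow (k : ℕ) : Tmat ^ k = !![1, 0; (k : ℤ), 1] := by
  induction k with
  | zero => simp [one_fin_two]
  | succ k ih => rw [pow_succ, ih, Tmat]; simp

lemma Umat_pow (k : ℕ) : Umat ^ k = !![1, (k : ℤ); 0, 1] := by
  induction k with
  | zero => simp [one_fin_two]
  | succ k ih => rw [pow_succ, ih, Umat]; simp [add_comm]

/-- The product of the blocks `T ^ (p + 1) * U ^ (q + 1)` over the pairs `(p, q)` in the list.
Exponents are shifted by one so that they are automatically positive. -/
def blocks (L : List (ℕ × ℕ)) : Matrix (Fin 2) (Fin 2) ℤ :=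
  (L.map fun x => Tmat ^ (x.1 + 1) * Umat ^ (x.2 + 1)).prod

lemma blocks_nil : blocks [] = 1 := rfl

lemma blocks_cons (p q : ℕ) (L : List (ℕ × ℕ)) :
    blocks ((p, q) :: L) = Tmat ^ (p + 1) * Umat ^ (q + 1) * blocks L := by
  simp [blocks]

lemma blocks_append_singleton (p q : ℕ) (L : List (ℕ × ℕ)) :
    blocks (L ++ [(p, q)]) = blocks L * (Tmat ^ (p + 1) * Umat ^ (q + 1)) := by
  simp [blocks]

lemma typeM_succ (n : ℕ) (m : ℕ → ℕ) :
    typeM (n + 1) m = Tmat ^ m (2 * n + 2) * Umat ^ m (2 * n + 1) * typeM n m := by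
  unfold typeM
  rw [List.range_succ_eq_map, List.map_cons, List.prod_cons, List.map_map]
  congr 2
  apply List.map_congr_left
  intro i _
  simp

lemma typeM_congr (n : ℕ) (m m' : ℕ → ℕ) (h : ∀ i, i ≤ 2 * n → m i = m' i) :
    typeM n m = typeM n m' := by
  induction n with
  | zero => rfl
  | succ n ih =>
    rw [typeM_succ, typeM_succ, ih fun i hi => h i (by omega), h _ (by omega), h _ (by omega)]

lemma exists_typeM_eq_blocks (L : List (ℕ × ℕ)) :
    ∃ m : ℕ → ℕ, (∀ i, 0 < m i) ∧ typeM L.length m = blocks L := by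
  induction L with
  | nil => exact ⟨fun _ => 1, by simp, rfl⟩
  | cons x L ih =>
    obtain ⟨p, q⟩ := x
    obtain ⟨m, hm, e⟩ := ih
    refine ⟨fun i => if i = 2 * L.length + 2 then p + 1
      else if i = 2 * L.length + 1 then q + 1 else m i, ?_, ?_⟩
    · intro i
      have := hm i
      dsimp only
      split_ifs <;> omega
    · rw [List.length_cons, typeM_succ, blocks_cons, ← e]
      congr 1
      · simp
      · apply typeM_congr
        intro i hi
        rw [if_neg (by omega), if_neg (by omega)]

/-- The word form of `M * U` for a nonnegative `M` of determinant one. The number `N` bounds the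
sum of the entries, on which the induction runs. -/
lemma exists_word (N : ℕ) : ∀ a b c d : ℤ, 0 ≤ a → 0 ≤ b → 0 ≤ c → 0 ≤ d →
    a * d - b * c = 1 → a + b + c + d ≤ N →
    ∃ (k : ℕ) (L : List (ℕ × ℕ)), (L ≠ [] ∨ 0 < k) ∧
      !![a, b; c, d] * Umat = Umat ^ k * blocks L := by
  induction N with
  | zero =>
    intro a b c d ha hb hc hd hdet hN
    have : a = 0 := by push_cast at hN; omega
    have : b = 0 := by push_cast at hN; omega
    subst a b
    simp at hdet
  | succ N ih =>
    intro a b c d ha hb hc hd hdet hN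
    push_cast at hN
    have key : (c ≤ a ∧ d ≤ b) ∨ (a ≤ c ∧ b ≤ d) ∨ (b = 0 ∧ c = 0) := by
      rcases lt_trichotomy a c with h | h | h
      · right; left
        refine ⟨h.le, ?_⟩
        by_contra! h'
        nlinarith
      · rcases le_total b d with h' | h'
        · exact Or.inr (Or.inl ⟨h.le, h'⟩)
        · exact Or.inl ⟨h.ge, h'⟩
      · rcases le_or_gt d b with h' | h'
        · exact Or.inl ⟨h.le, h'⟩
        · right; right
          constructor <;> nlinarith
    rcases key with ⟨h₁, h₂⟩ | ⟨h₁, h₂⟩ | ⟨rfl, rfl⟩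
    · have hpos : 0 < c + d := by
        by_contra! h
        have : c = 0 := by omega
        have : d = 0 := by omega
        subst c d
        simp at hdet
      obtain ⟨k, L, hkL, e⟩ := ih (a - c) (b - d) c d (by omega) (by omega) hc hd
        (by linarith) (by omega)
      refine ⟨k + 1, L, Or.inr k.succ_pos, ?_⟩
      rw [pow_succ', mul_assoc, ← e, ← mul_assoc]
      congr 1
      simp [Umat]
    · have hpos : 0 < a + b := by
        by_contra! h
        have : a = 0 := by omega
        have : b = 0 := by omega
        subst a b
        simp at hdet
      obtain ⟨k, L, hkL, e⟩ := ih a b (c - a) (d - b) ha hb (by omega) (by omega)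
        (by linarith) (by omega)
      have hword : !![a, b; c, d] * Umat = Tmat * (Umat ^ k * blocks L) := by
        rw [← e, ← mul_assoc]
        congr 1
        simp [Tmat]
      rw [hword]
      -- The new `T` starts a block with `U ^ k` if `k > 0`, and enlarges the first block otherwise.
      rcases k with _ | k
      · rcases L with _ | ⟨⟨p, q⟩, L⟩
        · simp at hkL
        · refine ⟨0, (p + 1, q) :: L, by simp, ?_⟩
          rw [blocks_cons, blocks_cons, pow_succ' Tmat (p + 1)]
          simp only [pow_zero, one_mul, mul_assoc]
      · refine ⟨0, (0, k) :: L, by simp, ?_⟩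
        rw [blocks_cons]
        simp [mul_assoc]
    · have h1 : a = 1 ∧ d = 1 := by
        have h : a * d = 1 := by linarith
        rcases Int.eq_one_or_neg_one_of_mul_eq_one' h with h | h
        · exact h
        · omega
      obtain ⟨rfl, rfl⟩ := h1
      exact ⟨1, [], by simp, by simp [blocks_nil, ← one_fin_two]⟩

lemma SLConj.trace_eq {A B : Matrix (Fin 2) (Fin 2) ℤ} (h : SLConj A B) : A.trace = B.trace := by
  obtain ⟨Q, hQ, e⟩ := h
  have hu : IsUnit Q.det := by simp [hQ]
  have : A = Q⁻¹ * (B * Q) := by rw [← e, ← mul_assoc, nonsing_inv_mul _ hu, one_mul]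
  rw [this, trace_mul_comm, mul_assoc, mul_nonsing_inv _ hu, mul_one]

/-- Every nonnegative matrix of determinant one and trace above two is conjugate to a nonempty
product of blocks, obtained by rotating its word. -/
lemma exists_conj_blocks (a b c d : ℤ) (ha : 0 ≤ a) (hb : 0 ≤ b) (hc : 0 ≤ c) (hd : 0 ≤ d)
    (hdet : a * d - b * c = 1) (htr : 2 < a + d) :
    ∃ L : List (ℕ × ℕ), L ≠ [] ∧ SLConj !![a, b; c, d] (blocks L) := by
  obtain ⟨k, L, hkL, e⟩ := exists_word (a + b + c + d).toNat a b c d ha hb hc hd hdet (by omega)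
  have hU : IsUnit Umat := by rw [isUnit_iff_isUnit_det, det_Umat]; exact isUnit_one
  have hUk : ∀ j, (Umat ^ j).det = 1 := fun j => by rw [det_pow, det_Umat, one_pow]
  have hTk : ∀ j, (Tmat ^ j).det = 1 := fun j => by rw [det_pow, det_Tmat, one_pow]
  rcases List.eq_nil_or_concat L with rfl | ⟨L, ⟨p, q⟩, rfl⟩
  · exfalso
    rcases k with _ | k
    · simp at hkL
    · rw [blocks_nil, mul_one, pow_succ] at e
      have h := congrArg Matrix.trace (hU.mul_right_cancel e)
      rw [Umat_pow] at h
      simp [trace_fin_two] at h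
      omega
  · rw [List.concat_eq_append, blocks_append_singleton] at e
    have hword : !![a, b; c, d] = Umat ^ k * (blocks L * (Tmat ^ (p + 1) * Umat ^ q)) := by
      apply hU.mul_right_cancel
      rw [e, pow_succ Umat q]
      simp only [mul_assoc]
    have hconj : SLConj !![a, b; c, d] (blocks L * (Tmat ^ (p + 1) * Umat ^ (q + k))) := by
      refine ⟨blocks L * (Tmat ^ (p + 1) * Umat ^ q), ?_, ?_⟩
      · have h := congrArg Matrix.det hword
        rw [det_mul, hUk, one_mul] at h
        rw [← h, det_fin_two_of, hdet]
      · rw [hword, pow_add Umat q k]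
        simp only [mul_assoc]
    rcases hqk : q + k with _ | j
    · -- The word is `blocks L * T ^ (p + 1)`: rotate the power of `T` to the front.
      rw [hqk, pow_zero, mul_one] at hconj
      have hrot := hconj.trans (SLConj.rotate _ (hTk (p + 1)))
      rcases L with _ | ⟨⟨p', q'⟩, L⟩
      · exfalso
        have h := hrot.trace_eq
        rw [blocks_nil, mul_one, Tmat_pow] at h
        simp [trace_fin_two] at h
        omega
      · refine ⟨(p + 1 + p', q') :: L, by simp, ?_⟩
        rw [blocks_cons, add_assoc, pow_add]
        rw [blocks_cons] at hrot
        simpa only [mul_assoc] using hrot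
    · refine ⟨L ++ [(p, j)], by simp, ?_⟩
      rw [blocks_append_singleton, ← hqk]
      exact hconj

/-- Descent on `|a - d|`, bounded by `N`, to nonnegative entries. -/
lemma exists_conj_nonneg (N : ℕ) : ∀ a b c d : ℤ, a * d - b * c = 1 → 2 < a + d →
    |a - d| ≤ N → ∃ a' b' c' d' : ℤ, 0 ≤ a' ∧ 0 ≤ b' ∧ 0 ≤ c' ∧ 0 ≤ d' ∧
      a' * d' - b' * c' = 1 ∧ 2 < a' + d' ∧ SLConj !![a, b; c, d] !![a', b'; c', d'] := by
  induction N using Nat.strong_induction_on with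
  | _ N ih =>
    intro a b c d hdet htr hN
    rcases le_or_gt 0 (b * c) with hbc | hbc
    · have hapos : 0 < a := by by_contra! h; nlinarith
      have hdpos : 0 < d := by by_contra! h; nlinarith
      rcases mul_nonneg_iff.mp hbc with ⟨hb, hc⟩ | ⟨hb, hc⟩
      · exact ⟨a, b, c, d, hapos.le, hb, hc, hdpos.le, hdet, htr, SLConj.refl _⟩
      · refine ⟨d, -c, -b, a, hdpos.le, by omega, by omega, hapos.le, by linarith, by omega,
          !![0, -1; 1, 0], by simp [det_fin_two], ?_⟩
        simp
    · have hb0 : b ≠ 0 := by rintro rfl; simp at hbc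
      have hc0 : c ≠ 0 := by rintro rfl; simp at hbc
      have hbig : |c| < |a - d| ∨ |b| < |a - d| := by
        by_contra! h
        have h₁ := mul_le_mul h.1 h.2 (abs_nonneg _) (abs_nonneg _)
        rw [abs_mul_abs_self, ← abs_mul, mul_comm c b, abs_of_neg hbc] at h₁
        nlinarith
      -- With `x = c` or `x = b`, conjugation by `U ^ s` or `T ^ (-s)` adds `2 * (s * x)` to `a - d`.
      have step : ∀ x : ℤ, x ≠ 0 → |x| < |a - d| →
          ∃ s : ℤ, |a - d + 2 * (s * x)| < |a - d| := by
        intro x hx0 hx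
        rcases lt_or_gt_of_ne hx0 with h | h <;> rcases le_total 0 (a - d) with h' | h'
        · refine ⟨1, ?_⟩; grind
        · refine ⟨-1, ?_⟩; grind
        · refine ⟨-1, ?_⟩; grind
        · refine ⟨1, ?_⟩; grind
      rcases hbig with h | h
      · obtain ⟨s, hs⟩ := step c hc0 h
        have hs' : a + s * c - (d - s * c) = a - d + 2 * (s * c) := by ring
        have hs0 := abs_nonneg (a - d + 2 * (s * c))
        obtain ⟨a', b', c', d', h1, h2, h3, h4, h5, h6, h7⟩ :=
          ih (|a - d + 2 * (s * c)|).toNat (by omega) (a + s * c)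
            (b + s * d - s * (a + s * c)) c (d - s * c) (by linear_combination hdet)
            (by linarith) (by rw [hs']; omega)
        refine ⟨a', b', c', d', h1, h2, h3, h4, h5, h6, SLConj.trans ?_ h7⟩
        refine ⟨!![1, s; 0, 1], by simp [det_fin_two], ?_⟩
        ext i j; fin_cases i <;> fin_cases j <;> simp [Matrix.mul_apply, Fin.sum_univ_two] <;> ring
      · obtain ⟨s, hs⟩ := step b hb0 h
        have hs' : a + s * b - (d - s * b) = a - d + 2 * (s * b) := by ring
        have hs0 := abs_nonneg (a - d + 2 * (s * b))
        obtain ⟨a', b', c', d', h1, h2, h3, h4, h5, h6, h7⟩ :=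
          ih (|a - d + 2 * (s * b)|).toNat (by omega) (a + s * b) b
            (c - s * a + s * (d - s * b)) (d - s * b) (by linear_combination hdet)
            (by linarith) (by rw [hs']; omega)
        refine ⟨a', b', c', d', h1, h2, h3, h4, h5, h6, SLConj.trans ?_ h7⟩
        refine ⟨!![1, 0; -s, 1], by simp [det_fin_two], ?_⟩
        ext i j; fin_cases i <;> fin_cases j <;> simp [Matrix.mul_apply, Fin.sum_univ_two] <;> ring

theorem conj_to_typeM (A : Matrix (Fin 2) (Fin 2) ℤ) (hA : A.det = 1) (htr : 2 < A.trace) :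
    ∃ (n : ℕ) (m : ℕ → ℕ) (Q : Matrix (Fin 2) (Fin 2) ℤ),
      1 ≤ n ∧ (∀ i, 1 ≤ i → i ≤ 2 * n → 0 < m i) ∧ Q.det = 1 ∧
      Q * A * Q⁻¹ = typeM n m := by
  rw [det_fin_two] at hA
  rw [trace_fin_two] at htr
  obtain ⟨a, b, c, d, ha, hb, hc, hd, hdet, ht, h₁⟩ :=
    exists_conj_nonneg (|A 0 0 - A 1 1|).toNat _ _ _ _ hA htr (by omega)
  rw [← eta_fin_two A] at h₁
  obtain ⟨L, hL, h₂⟩ := exists_conj_blocks a b c d ha hb hc hd hdet ht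
  obtain ⟨m, hm, e⟩ := exists_typeM_eq_blocks L
  obtain ⟨Q, hQ, hQA⟩ := h₁.trans h₂
  refine ⟨L.length, m, Q, List.length_pos_iff.mpr hL, fun i _ _ => hm i, hQ, ?_⟩
  rw [hQA, mul_assoc, mul_nonsing_inv _ (by simp [hQ]), mul_one, e]
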